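/- Let t be a positive integer and let G be a t-obstruction, i.e., a finite simple graph whose vertex set is the disjoint union of four independent sets A = {a_1,…,a_t}, B = {b_1,…,b_t}, C = {c_1,…,c_t}, D = {d_1,…,d_t}, each of size t, such that the edges of G with both endpoints in A ∪ B are exactly a_1b_1, …, a_tb_t, the edges of G with both endpoints in C ∪ D are exactly c_1d_1, …, c_td_t, every vertex of B is adjacent to every vertex of C, and the edges between A and C, between A and D, and between B and D are arbitrary. Then the induced matching treewidth of G is at least t. -/

import Mathlib

open SimpleGraph

/-- A tree decomposition of a (finite, simple) graph `G`: a finite tree `T` together with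
bags `bag x ⊆ V` such that every vertex is in a bag, every edge is inside some bag, and for
every vertex the set of nodes whose bag contains it induces a connected subtree of `T`. -/
structure TreeDecomp {V : Type} (G : SimpleGraph V) where
  ι : Type
  fintype_ι : Fintype ι
  T : SimpleGraph ι
  isTree : T.IsTree
  bag : ι → Set V
  mem_bag : ∀ v : V, ∃ x : ι, v ∈ bag x
  edge_bag : ∀ ⦃u v : V⦄, G.Adj u v → ∃ x : ι, u ∈ bag x ∧ v ∈ bag x
  bag_conn : ∀ v : V, (T.induce {x : ι | v ∈ bag x}).Connected

/-- `a`, `b` enumerate the endpoints of an induced matching of size `n` in `G`: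
the edges `a i — b i` are present, and endpoints of distinct edges are pairwise distinct
and non-adjacent. -/
def IsIndMatching {V : Type} (G : SimpleGraph V) {n : ℕ} (a b : Fin n → V) : Prop :=
  (∀ i, G.Adj (a i) (b i)) ∧
  ∀ i j : Fin n, i ≠ j →
    a i ≠ a j ∧ a i ≠ b j ∧ b i ≠ a j ∧ b i ≠ b j ∧
    ¬ G.Adj (a i) (a j) ∧ ¬ G.Adj (a i) (b j) ∧ ¬ G.Adj (b i) (a j) ∧ ¬ G.Adj (b i) (b j)

/-- `μ(T,β) ≤ μ`: every induced matching touching a bag of the decomposition has size at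
most `μ`. -/
def TreeDecomp.MuLE {V : Type} {G : SimpleGraph V} (td : TreeDecomp G) (μ : ℕ) : Prop :=
  ∀ (x : td.ι) (n : ℕ) (a b : Fin n → V),
    IsIndMatching G a b → (∀ i, a i ∈ td.bag x ∨ b i ∈ td.bag x) → n ≤ μ

/-- `α(T,β) ≤ k`: every independent set contained in a single bag has size at most `k`. -/
def TreeDecomp.AlphaLE {V : Type} {G : SimpleGraph V} (td : TreeDecomp G) (k : ℕ) : Prop :=
  ∀ (x : td.ι) (I : Finset V), ↑I ⊆ td.bag x →
    ((I : Set V)).Pairwise (fun u v => ¬ G.Adj u v) → I.card ≤ k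

/-- The induced matching treewidth `tree-μ(G)`: the least `n` admitting a tree decomposition
with `μ(T,β) ≤ n`. -/
noncomputable def treeMu {V : Type} (G : SimpleGraph V) : ℕ :=
  sInf {n | ∃ td : TreeDecomp G, td.MuLE n}

/-- The tree-independence number `tree-α(G)`: the least `n` admitting a tree decomposition
with `α(T,β) ≤ n`. -/
noncomputable def treeAlpha {V : Type} (G : SimpleGraph V) : ℕ :=
  sInf {n | ∃ td : TreeDecomp G, td.AlphaLE n}

/-!
Fix a tree decomposition. The nodes whose bag meets a given edge of `G` form a subtree, and two
edges that share a vertex or are joined by a third edge have intersecting subtrees. The `t`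
subtrees of the matching `a i — b i` therefore all meet the `t` subtrees of the matching
`c j — d j`, because every `b i` is adjacent to every `c j`.

Root the tree, and call the node of a subtree nearest to the root its top. A subtree which meets
the subtree `S`, and whose top is no deeper than the top `x` of `S`, must contain `x`, since every
walk from the root into `S` runs through `x`. So the deepest of all the tops lies in every subtree
of the other family, and its bag is touched by an induced matching of size `t`.
-/

section Tree

variable {α : Type*} {T : SimpleGraph α} {S R : Set α} {r u v w x y z : α}

theorem isPath_append_of_forall_mem_support_eq {p : T.Walk u v} {q : T.Walk v w} (hp : p.IsPath)
    (hq : q.IsPath) (h : ∀ x ∈ p.support, x ∈ q.support → x = v) : (p.append q).IsPath := by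
  rw [Walk.isPath_def, Walk.support_append]
  refine hp.support_nodup.append hq.support_nodup.tail fun x hxp hxq => ?_
  obtain rfl := h x hxp (List.mem_of_mem_tail hxq)
  have hnodup := hq.support_nodup
  rw [← Walk.cons_tail_support] at hnodup
  exact hnodup.notMem hxq

theorem dist_lt_dist_of_mem_support {p : T.Walk u v} (hp : p.length = T.dist u v)
    (hw : w ∈ p.support) (hwv : w ≠ v) : T.dist u w < T.dist u v := by
  classical
  calc T.dist u w ≤ (p.takeUntil w hw).length := dist_le _
    _ < p.length := Walk.length_takeUntil_lt_length hw hwv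
    _ = T.dist u v := hp

theorem exists_isPath_support_subset (hS : (T.induce S).Preconnected) (hu : u ∈ S) (hv : v ∈ S) :
    ∃ p : T.Walk u v, p.IsPath ∧ ∀ w ∈ p.support, w ∈ S := by
  obtain ⟨p, hp⟩ := hS.exists_isPath ⟨u, hu⟩ ⟨v, hv⟩
  refine ⟨p.map (Embedding.induce S).toHom, hp.map Subtype.val_injective, fun w hw => ?_⟩
  obtain ⟨s, -, rfl⟩ := List.mem_map.1 (p.support_map _ ▸ hw)
  exact s.2

theorem mem_support_of_minimalFor_dist (hT : T.IsTree) (hS : (T.induce S).Preconnected)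
    (hx : MinimalFor (· ∈ S) (T.dist r) x) (hz : z ∈ S) (q : T.Walk r z) : x ∈ q.support := by
  classical
  obtain ⟨p, hp, hpdist⟩ := hT.connected.exists_path_of_dist r x
  obtain ⟨s, hs, hsS⟩ := exists_isPath_support_subset hS hx.prop hz
  have hps : (p.append s).IsPath := isPath_append_of_forall_mem_support_eq hp hs fun w hwp hws => by
    by_contra hwx
    exact hx.not_lt (hsS w hws) (dist_lt_dist_of_mem_support hpdist hwp hwx)
  have hq : q.bypass = p.append s :=
    (hT.existsUnique_path r z).unique q.bypass_isPath hps
  apply q.support_bypass_subset_support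
  rw [hq]
  exact (Walk.mem_support_append_iff p s).2 (.inl p.end_mem_support)

theorem mem_of_minimalFor_dist (hT : T.IsTree) (hS : (T.induce S).Preconnected)
    (hR : (T.induce R).Preconnected) (hSR : (S ∩ R).Nonempty)
    (hx : MinimalFor (· ∈ S) (T.dist r) x) (hy : y ∈ R) (hyx : T.dist r y ≤ T.dist r x) :
    x ∈ R := by
  obtain ⟨z, hzS, hzR⟩ := hSR
  obtain ⟨p, hp⟩ := hT.connected.exists_walk_length_eq_dist r y
  obtain ⟨q, -, hqR⟩ := exists_isPath_support_subset hR hy hzR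
  have hxpq : x ∈ (p.append q).support := mem_support_of_minimalFor_dist hT hS hx hzS _
  rcases (Walk.mem_support_append_iff p q).1 hxpq with hxp | hxq
  · have hxy : x = y := by
      by_contra hne
      exact (dist_lt_dist_of_mem_support hp hxp hne).not_ge hyx
    exact hxy ▸ hy
  · exact hqR x hxq

theorem exists_forall_mem_or_forall_mem_of_inter_nonempty {ι κ : Type*} [Finite ι] [Finite κ]
    (hT : T.IsTree) {S : ι → Set α} {R : κ → Set α} (hS : ∀ i, (T.induce (S i)).Preconnected)
    (hR : ∀ j, (T.induce (R j)).Preconnected) (hSR : ∀ i j, (S i ∩ R j).Nonempty) :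
    ∃ x, (∀ i, x ∈ S i) ∨ ∀ j, x ∈ R j := by
  obtain ⟨r⟩ := hT.connected.nonempty
  rcases isEmpty_or_nonempty ι with _ | _
  · exact ⟨r, .inl isEmptyElim⟩
  rcases isEmpty_or_nonempty κ with _ | _
  · exact ⟨r, .inr isEmptyElim⟩
  choose x hx using fun i =>
    exists_minimalFor_of_wellFoundedLT (· ∈ S i) (T.dist r) (hSR i (Classical.arbitrary κ)).left
  choose y hy using fun j =>
    exists_minimalFor_of_wellFoundedLT (· ∈ R j) (T.dist r) (hSR (Classical.arbitrary ι) j).right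
  obtain ⟨i, hi⟩ := Finite.exists_max fun i => T.dist r (x i)
  obtain ⟨j, hj⟩ := Finite.exists_max fun j => T.dist r (y j)
  rcases le_total (T.dist r (y j)) (T.dist r (x i)) with hji | hij
  · exact ⟨x i, .inr fun k =>
      mem_of_minimalFor_dist hT (hS i) (hR k) (hSR i k) (hx i) (hy k).prop ((hj k).trans hji)⟩
  · exact ⟨y j, .inl fun k =>
      mem_of_minimalFor_dist hT (hR j) (hS k) (Set.inter_comm _ _ ▸ hSR k j) (hy j) (hx k).prop
        ((hi k).trans hij)⟩

end Tree

section InducedMatching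

variable {V : Type} {G : SimpleGraph V} {n : ℕ} {a b : Fin n → V}

theorem isIndMatching_of_adj_iff_eq (ha : ∀ i j, ¬ G.Adj (a i) (a j))
    (hb : ∀ i j, ¬ G.Adj (b i) (b j)) (hab : ∀ i j, G.Adj (a i) (b j) ↔ i = j) :
    IsIndMatching G a b := by
  have hadj : ∀ i, G.Adj (a i) (b i) := fun i => (hab i i).2 rfl
  have hne : ∀ i j, a i ≠ b j := fun i j h => hb j i (h ▸ hadj i)
  refine ⟨hadj, fun i j hij => ⟨fun h => ?_, hne i j, (hne j i).symm, fun h => ?_, ha i j,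
    fun h => ?_, fun h => ?_, hb i j⟩⟩
  · exact hij ((hab i j).1 (h ▸ hadj j))
  · exact hij ((hab i j).1 (h ▸ hadj i))
  · exact hij ((hab i j).1 h)
  · exact hij ((hab j i).1 h.symm).symm

theorem IsIndMatching.injective_left (h : IsIndMatching G a b) : Function.Injective a :=
  fun i j hij => by_contra fun hne => (h.2 i j hne).1 hij

theorem IsIndMatching.le_card [Finite V] (h : IsIndMatching G a b) : n ≤ Nat.card V := by
  simpa using Nat.card_le_card_of_injective a h.injective_left

end InducedMatching

namespace TreeDecomp

variable {V : Type} {G : SimpleGraph V}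

instance : Nonempty (TreeDecomp G) :=
  ⟨{ ι := Unit
     fintype_ι := inferInstance
     T := ⊥
     isTree := .of_subsingleton
     bag := fun _ => Set.univ
     mem_bag := fun v => ⟨(), Set.mem_univ v⟩
     edge_bag := fun u v _ => ⟨(), Set.mem_univ u, Set.mem_univ v⟩
     bag_conn := fun v =>
      have : Nonempty {_x : Unit | v ∈ Set.univ} := ⟨⟨(), Set.mem_univ v⟩⟩
      IsTree.of_subsingleton.connected }⟩

variable (td : TreeDecomp G)

theorem muLE_card [Finite V] : td.MuLE (Nat.card V) :=
  fun _ _ _ _ h _ => h.le_card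

theorem exists_mem_bag_of_eq_or_adj {u v : V} (h : u = v ∨ G.Adj u v) :
    ∃ x, u ∈ td.bag x ∧ v ∈ td.bag x := by
  rcases h with rfl | h
  · simpa only [and_self] using td.mem_bag u
  · exact td.edge_bag h

theorem induce_mem_bag_or_mem_bag_preconnected {u v : V} (h : G.Adj u v) :
    (td.T.induce {x | u ∈ td.bag x ∨ v ∈ td.bag x}).Preconnected :=
  (induce_union_connected (td.bag_conn u).preconnected (td.bag_conn v).preconnected
    (td.edge_bag h)).preconnected

theorem exists_bag_touches {ι κ : Type*} [Finite ι] [Finite κ] {a b : ι → V} {c d : κ → V}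
    (hab : ∀ i, G.Adj (a i) (b i)) (hcd : ∀ j, G.Adj (c j) (d j))
    (h : ∀ i j, ∃ u ∈ ({a i, b i} : Set V), ∃ v ∈ ({c j, d j} : Set V), u = v ∨ G.Adj u v) :
    ∃ x, (∀ i, a i ∈ td.bag x ∨ b i ∈ td.bag x) ∨ ∀ j, c j ∈ td.bag x ∨ d j ∈ td.bag x := by
  refine exists_forall_mem_or_forall_mem_of_inter_nonempty td.isTree
    (fun i => td.induce_mem_bag_or_mem_bag_preconnected (hab i))
    (fun j => td.induce_mem_bag_or_mem_bag_preconnected (hcd j)) fun i j => ?_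
  obtain ⟨u, hu, v, hv, huv⟩ := h i j
  obtain ⟨x, hux, hvx⟩ := td.exists_mem_bag_of_eq_or_adj huv
  have hab_touches : a i ∈ td.bag x ∨ b i ∈ td.bag x := by
    rcases hu with rfl | rfl
    exacts [.inl hux, .inr hux]
  have hcd_touches : c j ∈ td.bag x ∨ d j ∈ td.bag x := by
    rcases hv with rfl | rfl
    exacts [.inl hvx, .inr hvx]
  exact ⟨x, hab_touches, hcd_touches⟩

end TreeDecomp

theorem le_treeMu {V : Type} [Finite V] {G : SimpleGraph V} {k : ℕ}
    (h : ∀ (td : TreeDecomp G) (n : ℕ), td.MuLE n → k ≤ n) : k ≤ treeMu G := by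
  obtain ⟨td⟩ : Nonempty (TreeDecomp G) := inferInstance
  exact le_csInf ⟨_, td, td.muLE_card⟩ fun n ⟨td, hn⟩ => h td n hn

theorem stmt16_general {V : Type} [Finite V] {G : SimpleGraph V} {m n : ℕ} {a b : Fin m → V}
    {c d : Fin n → V} (hab : IsIndMatching G a b) (hcd : IsIndMatching G c d)
    (h : ∀ i j, ∃ u ∈ ({a i, b i} : Set V), ∃ v ∈ ({c j, d j} : Set V), u = v ∨ G.Adj u v) :
    min m n ≤ treeMu G := by
  refine le_treeMu fun td k hk => ?_
  obtain ⟨x, hx | hx⟩ := td.exists_bag_touches hab.1 hcd.1 h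
  · exact (min_le_left m n).trans (hk x m a b hab hx)
  · exact (min_le_right m n).trans (hk x n c d hcd hx)

/-- Every `t`-obstruction has induced matching treewidth at least `t`. Here a
`t`-obstruction is a graph whose vertex set is the disjoint union of four independent sets
`A = a '' univ`, `B = b '' univ`, `C = c '' univ`, `D = d '' univ`, each of size `t`, such
that the edges inside `A ∪ B` are exactly the matching `a i — b i`, the edges inside
`C ∪ D` are exactly the matching `c i — d i`, all edges between `B` and `C` are present,
and the edges between `A` and `C`, `A` and `D`, `B` and `D` are arbitrary. -/
theorem stmt16 (t : ℕ) (ht : 0 < t) (V : Type) [Fintype V] (G : SimpleGraph V)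
    (a b c d : Fin t → V)
    (hbij : Function.Bijective
      (Sum.elim a (Sum.elim b (Sum.elim c d)) :
        Fin t ⊕ (Fin t ⊕ (Fin t ⊕ Fin t)) → V))
    (hA : ∀ i j : Fin t, ¬ G.Adj (a i) (a j))
    (hB : ∀ i j : Fin t, ¬ G.Adj (b i) (b j))
    (hC : ∀ i j : Fin t, ¬ G.Adj (c i) (c j))
    (hD : ∀ i j : Fin t, ¬ G.Adj (d i) (d j))
    (hAB : ∀ i j : Fin t, G.Adj (a i) (b j) ↔ i = j)
    (hCD : ∀ i j : Fin t, G.Adj (c i) (d j) ↔ i = j)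
    (hBC : ∀ i j : Fin t, G.Adj (b i) (c j)) :
    t ≤ treeMu G := by
  simpa only [min_self] using stmt16_general
    (isIndMatching_of_adj_iff_eq hA hB hAB) (isIndMatching_of_adj_iff_eq hC hD hCD)
    fun i j => ⟨b i, by simp, c j, by simp, .inr (hBC i j)⟩
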